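/- Existential preservation of validity: every valid CPL₀ labelled sequent has a valid ⇝-normal form; that is, if ⊢ L is valid then there exists a finite set Ψ of labelled sequents such that {⊢ L} reduces to Ψ by finitely many ⇝-steps, Ψ is ⇝-normal, and every sequent in Ψ is valid. -/

import Mathlib

open MeasureTheory

/-- The Cantor space `2^ω` of infinite binary sequences. -/
abbrev Cantor : Type := ℕ → Bool

/-- Rational numbers in the unit interval `[0,1]`. -/
abbrev I01 : Type := (Set.Icc (0 : ℚ) 1)

/-- The value of a rational `q ∈ [0,1]` as an extended nonnegative real. -/
noncomputable def qq (q : I01) : ENNReal := ENNReal.ofReal (q.1 : ℝ)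

/-- `μ` is the fair-coin Bernoulli (uniform) product measure on the Cantor space:
it is a probability measure giving each cylinder fixing the values on a finite set `s`
of coordinates the measure `2^{-|s|}`. -/
def IsCantorMeasure (μ : Measure Cantor) : Prop :=
  IsProbabilityMeasure μ ∧
    ∀ (s : Finset ℕ) (v : ℕ → Bool),
      μ {f : Cantor | ∀ i ∈ s, f i = v i} = (2 : ENNReal)⁻¹ ^ s.card

/-- Boolean formulas `b ::= xᵢ | ⊤ | ⊥ | ¬b | b ∧ c | b ∨ c`. -/
inductive BF : Type where
  | var : ℕ → BF
  | tt : BF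
  | ff : BF
  | neg : BF → BF
  | conj : BF → BF → BF
  | disj : BF → BF → BF
deriving DecidableEq

/-- The interpretation `⟦b⟧ ⊆ 2^ω` of a Boolean formula. -/
def BF.sem : BF → Set Cantor
  | .var i => {f | f i = true}
  | .tt => Set.univ
  | .ff => ∅
  | .neg b => (BF.sem b)ᶜ
  | .conj b c => BF.sem b ∩ BF.sem c
  | .disj b c => BF.sem b ∪ BF.sem c

/-- Formulas of univariate counting propositional logic CPL₀:
`A ::= i | ¬A | A ∧ B | A ∨ B | C^q A | D^q A` with `q` a rational in `[0,1]`. -/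
inductive CPL0 : Type where
  | atom : ℕ → CPL0
  | neg : CPL0 → CPL0
  | conj : CPL0 → CPL0 → CPL0
  | disj : CPL0 → CPL0 → CPL0
  | cnt : I01 → CPL0 → CPL0
  | dnt : I01 → CPL0 → CPL0
deriving DecidableEq

open scoped Classical in
/-- The interpretation `⟦A⟧ ⊆ 2^ω` of a CPL₀ formula (relative to the measure `μ`). -/
noncomputable def CPL0.sem (μ : Measure Cantor) : CPL0 → Set Cantor
  | .atom i => {f | f i = true}
  | .neg A => (CPL0.sem μ A)ᶜ
  | .conj A B => CPL0.sem μ A ∩ CPL0.sem μ B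
  | .disj A B => CPL0.sem μ A ∪ CPL0.sem μ B
  | .cnt q A => if qq q ≤ μ (CPL0.sem μ A) then Set.univ else ∅
  | .dnt q A => if μ (CPL0.sem μ A) < qq q then Set.univ else ∅

/-- Labelled formulas: `b ↣ A` (`fwd`) and `b ↢ A` (`bwd`). -/
inductive LF : Type where
  | fwd : BF → CPL0 → LF
  | bwd : BF → CPL0 → LF
deriving DecidableEq

/-- Validity of a labelled formula: `b ↣ A` is valid when `⟦b⟧ ⊆ ⟦A⟧`,
and `b ↢ A` is valid when `⟦A⟧ ⊆ ⟦b⟧`. -/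
def LF.valid (μ : Measure Cantor) : LF → Prop
  | .fwd b A => BF.sem b ⊆ CPL0.sem μ A
  | .bwd b A => CPL0.sem μ A ⊆ BF.sem b

/-- The labelled, one-sided, single-succedent sequent calculus for CPL₀:
`Der μ L` means that the sequent `⊢ L` is derivable. -/
inductive Der (μ : Measure Cantor) : LF → Prop where
  | ax1 {b : BF} {n : ℕ} :
      BF.sem b ⊆ BF.sem (.var n) → Der μ (.fwd b (.atom n))
  | ax2 {b : BF} {n : ℕ} :
      BF.sem (.var n) ⊆ BF.sem b → Der μ (.bwd b (.atom n))
  | runion {b c d : BF} {A : CPL0} :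
      Der μ (.fwd c A) → Der μ (.fwd d A) →
      BF.sem b ⊆ BF.sem (.disj c d) → Der μ (.fwd b A)
  | rinter {b c d : BF} {A : CPL0} :
      Der μ (.bwd c A) → Der μ (.bwd d A) →
      BF.sem (.conj c d) ⊆ BF.sem b → Der μ (.bwd b A)
  | negF {b c : BF} {A : CPL0} :
      Der μ (.bwd c A) → BF.sem b ⊆ BF.sem (.neg c) → Der μ (.fwd b (.neg A))
  | negB {b c : BF} {A : CPL0} :
      Der μ (.fwd c A) → BF.sem (.neg c) ⊆ BF.sem b → Der μ (.bwd b (.neg A))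
  | disjF1 {b : BF} {A B : CPL0} :
      Der μ (.fwd b A) → Der μ (.fwd b (.disj A B))
  | disjF2 {b : BF} {A B : CPL0} :
      Der μ (.fwd b B) → Der μ (.fwd b (.disj A B))
  | disjB {b : BF} {A B : CPL0} :
      Der μ (.bwd b A) → Der μ (.bwd b B) → Der μ (.bwd b (.disj A B))
  | conjF {b : BF} {A B : CPL0} :
      Der μ (.fwd b A) → Der μ (.fwd b B) → Der μ (.fwd b (.conj A B))
  | conjB1 {b : BF} {A B : CPL0} :
      Der μ (.bwd b A) → Der μ (.bwd b (.conj A B))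
  | conjB2 {b : BF} {A B : CPL0} :
      Der μ (.bwd b B) → Der μ (.bwd b (.conj A B))
  | muF {b : BF} {A : CPL0} :
      μ (BF.sem b) = 0 → Der μ (.fwd b A)
  | muB {b : BF} {A : CPL0} :
      μ (BF.sem b) = 1 → Der μ (.bwd b A)
  | cntF {b c : BF} {q : I01} {A : CPL0} :
      Der μ (.fwd c A) → qq q ≤ μ (BF.sem c) → Der μ (.fwd b (.cnt q A))
  | cntB {b c : BF} {q : I01} {A : CPL0} :
      Der μ (.bwd c A) → μ (BF.sem c) < qq q → Der μ (.bwd b (.cnt q A))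
  | dntF {b c : BF} {q : I01} {A : CPL0} :
      Der μ (.bwd c A) → μ (BF.sem c) < qq q → Der μ (.fwd b (.dnt q A))
  | dntB {b c : BF} {q : I01} {A : CPL0} :
      Der μ (.fwd c A) → qq q ≤ μ (BF.sem c) → Der μ (.bwd b (.dnt q A))

/-- Sequents: either a labelled formula `⊢ L`, or the falsum sequent `⊢ ⊥`. -/
inductive Sequent : Type where
  | lf : LF → Sequent
  | falsum : Sequent
deriving DecidableEq

/-- Validity of a sequent: the falsum sequent `⊢ ⊥` is never valid. -/
def Sequent.valid (μ : Measure Cantor) : Sequent → Prop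
  | .lf L => L.valid μ
  | .falsum => False

/-- Derivability of a sequent: the falsum sequent `⊢ ⊥` is never derivable. -/
def Sequent.der (μ : Measure Cantor) : Sequent → Prop
  | .lf L => Der μ L
  | .falsum => False

/-- The one-step decomposition rewriting relation `⇝₀` from a sequent to a
finite set of sequents. -/
inductive Dec0 (μ : Measure Cantor) : Sequent → Finset Sequent → Prop where
  | negF {b c : BF} {A : CPL0} :
      BF.sem b ⊆ BF.sem (.neg c) →
      Dec0 μ (.lf (.fwd b (.neg A))) {Sequent.lf (.bwd c A)}
  | negB {b c : BF} {A : CPL0} :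
      BF.sem (.neg c) ⊆ BF.sem b →
      Dec0 μ (.lf (.bwd b (.neg A))) {Sequent.lf (.fwd c A)}
  | disjF {b c d : BF} {A B : CPL0} :
      BF.sem b ⊆ BF.sem (.disj c d) →
      Dec0 μ (.lf (.fwd b (.disj A B))) {Sequent.lf (.fwd c A), Sequent.lf (.fwd d B)}
  | disjB {b : BF} {A B : CPL0} :
      Dec0 μ (.lf (.bwd b (.disj A B))) {Sequent.lf (.bwd b A), Sequent.lf (.bwd b B)}
  | conjF {b : BF} {A B : CPL0} :
      Dec0 μ (.lf (.fwd b (.conj A B))) {Sequent.lf (.fwd b A), Sequent.lf (.fwd b B)}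
  | conjB {b c d : BF} {A B : CPL0} :
      BF.sem (.conj c d) ⊆ BF.sem b →
      Dec0 μ (.lf (.bwd b (.conj A B))) {Sequent.lf (.bwd c A), Sequent.lf (.bwd d B)}
  | cntF {b c : BF} {q : I01} {A : CPL0} :
      qq q ≤ μ (BF.sem c) →
      Dec0 μ (.lf (.fwd b (.cnt q A))) {Sequent.lf (.fwd c A)}
  | cntB {b c : BF} {q : I01} {A : CPL0} :
      μ (BF.sem c) < qq q →
      Dec0 μ (.lf (.bwd b (.cnt q A))) {Sequent.lf (.bwd c A)}
  | dntF {b c : BF} {q : I01} {A : CPL0} :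
      μ (BF.sem c) < qq q →
      Dec0 μ (.lf (.fwd b (.dnt q A))) {Sequent.lf (.bwd c A)}
  | dntB {b c : BF} {q : I01} {A : CPL0} :
      qq q ≤ μ (BF.sem c) →
      Dec0 μ (.lf (.bwd b (.dnt q A))) {Sequent.lf (.fwd c A)}
  | muF {b : BF} {A : CPL0} :
      μ (BF.sem b) = 0 → Dec0 μ (.lf (.fwd b A)) ∅
  | muB {b : BF} {A : CPL0} :
      μ (BF.sem b) = 1 → Dec0 μ (.lf (.bwd b A)) ∅
  | dnt0 {b : BF} {A : CPL0} :
      μ (BF.sem b) ≠ 0 → Dec0 μ (.lf (.fwd b (.dnt 0 A))) {Sequent.falsum}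
  | cnt0 {b : BF} {A : CPL0} :
      μ (BF.sem b) ≠ 1 → Dec0 μ (.lf (.bwd b (.cnt 0 A))) {Sequent.falsum}

/-- The set-decomposition relation `⇝` on finite sets of sequents:
`Φ ⇝ Ψ` when `Φ = Φ' ∪ {⊢ L}`, `⊢ L ⇝₀ Ψ'` and `Ψ = Φ' ∪ Ψ'`. -/
def Dec (μ : Measure Cantor) (Φ Ψ : Finset Sequent) : Prop :=
  ∃ (Φ' Ψ' : Finset Sequent) (s : Sequent),
    Dec0 μ s Ψ' ∧ Φ = insert s Φ' ∧ Ψ = Φ' ∪ Ψ'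

/-- A finite set of sequents is `⇝`-normal when no decomposition step applies to it. -/
def DecNormal (μ : Measure Cantor) (Φ : Finset Sequent) : Prop :=
  ¬ ∃ Ψ : Finset Sequent, Dec μ Φ Ψ

/-!
Every `⟦A⟧` is also `⟦b⟧` for some Boolean formula `b`, because a counting formula denotes either
the whole Cantor space or nothing. Where a decomposition rule leaves the labels of its
premises free, such Boolean formulas make the premises valid, and its side condition then follows
from the validity of the conclusion. For a counting quantifier the side condition can instead fail,
but validity then forces the label to denote `∅` or `2^ω`, and a measure rule erases the sequent.
Hence a valid sequent that can be decomposed at all can be decomposed into valid ones, and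
iterating this terminates because every rule removes a connective.
-/

section Semantics

variable (μ : Measure Cantor)

open scoped Classical in
/-- A Boolean formula with the same interpretation as the given CPL₀ formula, used as the label of
the premises of a decomposition. A counting formula becomes `⊤` or `⊥`, decided classically. -/
noncomputable def CPL0.toBF : CPL0 → BF
  | .atom i => .var i
  | .neg A => .neg A.toBF
  | .conj A B => .conj A.toBF B.toBF
  | .disj A B => .disj A.toBF B.toBF
  | .cnt q A => if qq q ≤ μ (A.sem μ) then .tt else .ff
  | .dnt q A => if μ (A.sem μ) < qq q then .tt else .ff

theorem CPL0.sem_toBF (A : CPL0) : (A.toBF μ).sem = A.sem μ := by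
  induction A with
  | atom => rfl
  | neg A ih => simp only [toBF, BF.sem, sem, ih]
  | conj A B ihA ihB | disj A B ihA ihB => simp only [toBF, BF.sem, sem, ihA, ihB]
  | cnt | dnt => simp only [toBF, sem, apply_ite BF.sem, BF.sem]

theorem LF.valid_fwd_toBF (A : CPL0) : (LF.fwd (A.toBF μ) A).valid μ :=
  (A.sem_toBF μ).subset

theorem LF.valid_bwd_toBF (A : CPL0) : (LF.bwd (A.toBF μ) A).valid μ :=
  (A.sem_toBF μ).superset

variable {μ} {q : I01} {A : CPL0}

theorem CPL0.sem_cnt_of_le (h : qq q ≤ μ (A.sem μ)) : (CPL0.cnt q A).sem μ = Set.univ :=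
  if_pos h

theorem CPL0.sem_cnt_of_lt (h : μ (A.sem μ) < qq q) : (CPL0.cnt q A).sem μ = ∅ :=
  if_neg h.not_ge

theorem CPL0.sem_dnt_of_lt (h : μ (A.sem μ) < qq q) : (CPL0.dnt q A).sem μ = Set.univ :=
  if_pos h

theorem CPL0.sem_dnt_of_le (h : qq q ≤ μ (A.sem μ)) : (CPL0.dnt q A).sem μ = ∅ :=
  if_neg h.not_gt

end Semantics

section Decomposition

variable {μ : Measure Cantor} {b : BF} {A : CPL0} {s : Sequent} {T : Finset Sequent}

theorem forall_valid_singleton {L : LF} :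
    (∀ t ∈ ({.lf L} : Finset Sequent), t.valid μ) ↔ L.valid μ := by
  simp only [Finset.mem_singleton, forall_eq, Sequent.valid]

theorem forall_valid_pair {L L' : LF} :
    (∀ t ∈ ({.lf L, .lf L'} : Finset Sequent), t.valid μ) ↔ L.valid μ ∧ L'.valid μ := by
  rw [Finset.forall_mem_insert, forall_valid_singleton, Sequent.valid]

theorem Dec0.fwd_empty_of_sem_eq_empty (hA : A.sem μ = ∅) (h : (LF.fwd b A).valid μ) :
    Dec0 μ (.lf (.fwd b A)) ∅ :=
  .muF (by rw [Set.subset_empty_iff.1 (h.trans hA.subset), measure_empty])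

theorem Dec0.bwd_empty_of_sem_eq_univ [IsProbabilityMeasure μ] (hA : A.sem μ = Set.univ)
    (h : (LF.bwd b A).valid μ) : Dec0 μ (.lf (.bwd b A)) ∅ :=
  .muB (by rw [Set.univ_subset_iff.1 (hA.superset.trans h), measure_univ])

theorem Dec0.exists_forall_valid_of_fwd (h : (LF.fwd b A).valid μ)
    (hT : Dec0 μ (.lf (.fwd b A)) T) :
    ∃ T', Dec0 μ (.lf (.fwd b A)) T' ∧ ∀ t ∈ T', t.valid μ := by
  cases A with
  | atom i =>
    cases hT with
    | muF hb => exact ⟨∅, .muF hb, by simp⟩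
  | neg A =>
    have hb : b.sem ⊆ (A.toBF μ).neg.sem := h.trans ((CPL0.neg A).sem_toBF μ).superset
    exact ⟨_, .negF hb, forall_valid_singleton.2 (LF.valid_bwd_toBF μ A)⟩
  | conj A B =>
    exact ⟨_, .conjF, forall_valid_pair.2
      ⟨h.trans Set.inter_subset_left, h.trans Set.inter_subset_right⟩⟩
  | disj A B =>
    have hb : b.sem ⊆ ((A.toBF μ).disj (B.toBF μ)).sem :=
      h.trans ((A.disj B).sem_toBF μ).superset
    exact ⟨_, .disjF hb, forall_valid_pair.2 ⟨LF.valid_fwd_toBF μ A, LF.valid_fwd_toBF μ B⟩⟩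
  | cnt q A =>
    rcases le_or_gt (qq q) (μ (A.sem μ)) with hq | hq
    · exact ⟨_, .cntF (by rwa [A.sem_toBF μ]), forall_valid_singleton.2 (LF.valid_fwd_toBF μ A)⟩
    · exact ⟨∅, .fwd_empty_of_sem_eq_empty (CPL0.sem_cnt_of_lt hq) h, by simp⟩
  | dnt q A =>
    rcases le_or_gt (qq q) (μ (A.sem μ)) with hq | hq
    · exact ⟨∅, .fwd_empty_of_sem_eq_empty (CPL0.sem_dnt_of_le hq) h, by simp⟩
    · exact ⟨_, .dntF (by rwa [A.sem_toBF μ]), forall_valid_singleton.2 (LF.valid_bwd_toBF μ A)⟩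

theorem Dec0.exists_forall_valid_of_bwd [IsProbabilityMeasure μ] (h : (LF.bwd b A).valid μ)
    (hT : Dec0 μ (.lf (.bwd b A)) T) :
    ∃ T', Dec0 μ (.lf (.bwd b A)) T' ∧ ∀ t ∈ T', t.valid μ := by
  cases A with
  | atom i =>
    cases hT with
    | muB hb => exact ⟨∅, .muB hb, by simp⟩
  | neg A =>
    have hb : (A.toBF μ).neg.sem ⊆ b.sem := ((CPL0.neg A).sem_toBF μ).subset.trans h
    exact ⟨_, .negB hb, forall_valid_singleton.2 (LF.valid_fwd_toBF μ A)⟩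
  | conj A B =>
    have hb : ((A.toBF μ).conj (B.toBF μ)).sem ⊆ b.sem :=
      ((A.conj B).sem_toBF μ).subset.trans h
    exact ⟨_, .conjB hb, forall_valid_pair.2 ⟨LF.valid_bwd_toBF μ A, LF.valid_bwd_toBF μ B⟩⟩
  | disj A B =>
    exact ⟨_, .disjB, forall_valid_pair.2
      ⟨Set.subset_union_left.trans h, Set.subset_union_right.trans h⟩⟩
  | cnt q A =>
    rcases le_or_gt (qq q) (μ (A.sem μ)) with hq | hq
    · exact ⟨∅, .bwd_empty_of_sem_eq_univ (CPL0.sem_cnt_of_le hq) h, by simp⟩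
    · exact ⟨_, .cntB (by rwa [A.sem_toBF μ]), forall_valid_singleton.2 (LF.valid_bwd_toBF μ A)⟩
  | dnt q A =>
    rcases le_or_gt (qq q) (μ (A.sem μ)) with hq | hq
    · exact ⟨_, .dntB (by rwa [A.sem_toBF μ]), forall_valid_singleton.2 (LF.valid_fwd_toBF μ A)⟩
    · exact ⟨∅, .bwd_empty_of_sem_eq_univ (CPL0.sem_dnt_of_lt hq) h, by simp⟩

theorem Dec0.exists_forall_valid [IsProbabilityMeasure μ] (h : s.valid μ) (hT : Dec0 μ s T) :
    ∃ T', Dec0 μ s T' ∧ ∀ t ∈ T', t.valid μ := by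
  match s with
  | .lf (.fwd _ _) => exact hT.exists_forall_valid_of_fwd h
  | .lf (.bwd _ _) => exact hT.exists_forall_valid_of_bwd h
  | .falsum => exact h.elim

/-- The number of connectives of a CPL₀ formula, counting quantifiers; it makes decomposition
terminate. -/
def CPL0.numConnectives : CPL0 → ℕ
  | .atom _ => 0
  | .neg A => A.numConnectives + 1
  | .conj A B => A.numConnectives + B.numConnectives + 1
  | .disj A B => A.numConnectives + B.numConnectives + 1
  | .cnt _ A => A.numConnectives + 1
  | .dnt _ A => A.numConnectives + 1

/-- The termination measure of a sequent: the number of connectives of its formula, ignoring its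
label. It is `0` on the falsum sequent. -/
def Sequent.numConnectives : Sequent → ℕ
  | .lf (.fwd _ A) => A.numConnectives
  | .lf (.bwd _ A) => A.numConnectives
  | .falsum => 0

theorem Dec0.numConnectives_lt {t : Sequent} (h : Dec0 μ s T) (ht : t ∈ T) :
    t.numConnectives < s.numConnectives := by
  cases h <;> simp only [Finset.mem_insert, Finset.mem_singleton, Finset.notMem_empty] at ht
  case disjF | disjB | conjF | conjB =>
    rcases ht with rfl | rfl <;> simp only [Sequent.numConnectives, CPL0.numConnectives] <;> omega
  all_goals
    subst ht
    simp only [Sequent.numConnectives, CPL0.numConnectives]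
    omega

end Decomposition

section NormalForms

variable {μ : Measure Cantor} {Φ Φ' Ψ Ψ' : Finset Sequent}

theorem Dec0.dec_singleton {s : Sequent} (h : Dec0 μ s Φ) : Dec μ {s} Φ :=
  ⟨∅, Φ, s, h, rfl, (Finset.empty_union Φ).symm⟩

theorem Dec.union_right (h : Dec μ Φ Ψ) (Γ : Finset Sequent) : Dec μ (Φ ∪ Γ) (Ψ ∪ Γ) := by
  obtain ⟨Δ, T, s, hs, rfl, rfl⟩ := h
  exact ⟨Δ ∪ Γ, T, s, hs, Finset.insert_union .., Finset.union_right_comm ..⟩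

theorem Dec.reflTransGen_union (h : Relation.ReflTransGen (Dec μ) Φ Ψ)
    (h' : Relation.ReflTransGen (Dec μ) Φ' Ψ') :
    Relation.ReflTransGen (Dec μ) (Φ ∪ Φ') (Ψ ∪ Ψ') := by
  have hleft : Relation.ReflTransGen (Dec μ) (Φ ∪ Φ') (Ψ ∪ Φ') :=
    h.lift (· ∪ Φ') fun _ _ hd => hd.union_right Φ'
  have hright : Relation.ReflTransGen (Dec μ) (Ψ ∪ Φ') (Ψ ∪ Ψ') := by
    simpa only [Finset.union_comm Ψ] using h'.lift (· ∪ Ψ) fun _ _ hd => hd.union_right Ψ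
  exact hleft.trans hright

theorem decNormal_iff : DecNormal μ Φ ↔ ∀ s ∈ Φ, ∀ T, ¬ Dec0 μ s T := by
  constructor
  · intro h s hs T hT
    exact h ⟨Φ ∪ T, Φ, T, s, hT, (Finset.insert_eq_of_mem hs).symm, rfl⟩
  · rintro h ⟨_, Δ, T, s, hT, rfl, rfl⟩
    exact h s (Finset.mem_insert_self s Δ) T hT

variable (μ) in
/-- A finite set of sequents reduces under `⇝` to a valid `⇝`-normal set; this is the property
propagated from the reducts of a sequent to the sequent itself. -/
def HasValidNormalForm (Φ : Finset Sequent) : Prop :=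
  ∃ Ψ : Finset Sequent,
    Relation.ReflTransGen (Dec μ) Φ Ψ ∧ DecNormal μ Ψ ∧ ∀ s ∈ Ψ, s.valid μ

theorem HasValidNormalForm.of_dec (h : Dec μ Φ Φ') (h' : HasValidNormalForm μ Φ') :
    HasValidNormalForm μ Φ :=
  let ⟨Ψ, hΨ, hnormal⟩ := h'
  ⟨Ψ, hΨ.head h, hnormal⟩

theorem HasValidNormalForm.union (h : HasValidNormalForm μ Φ) (h' : HasValidNormalForm μ Φ') :
    HasValidNormalForm μ (Φ ∪ Φ') := by
  obtain ⟨Ψ, hred, hnormal, hvalid⟩ := h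
  obtain ⟨Ψ', hred', hnormal', hvalid'⟩ := h'
  refine ⟨Ψ ∪ Ψ', Dec.reflTransGen_union hred hred', ?_,
    Finset.forall_mem_union.2 ⟨hvalid, hvalid'⟩⟩
  rw [decNormal_iff] at hnormal hnormal' ⊢
  exact Finset.forall_mem_union.2 ⟨hnormal, hnormal'⟩

theorem hasValidNormalForm_of_forall_singleton (h : ∀ s ∈ Φ, HasValidNormalForm μ {s}) :
    HasValidNormalForm μ Φ := by
  induction Φ using Finset.induction_on with
  | empty => exact ⟨∅, .refl, decNormal_iff.2 (by simp), by simp⟩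
  | insert s Φ _ ih =>
    rw [Finset.forall_mem_insert] at h
    exact h.1.union (ih h.2)

theorem Sequent.hasValidNormalForm_singleton [IsProbabilityMeasure μ] (s : Sequent)
    (h : s.valid μ) : HasValidNormalForm μ {s} := by
  by_cases hdec : ∃ T, Dec0 μ s T
  · obtain ⟨_, hdec⟩ := hdec
    obtain ⟨T, hT, hvalid⟩ := hdec.exists_forall_valid h
    refine .of_dec hT.dec_singleton (hasValidNormalForm_of_forall_singleton fun t ht => ?_)
    have := hT.numConnectives_lt ht
    exact t.hasValidNormalForm_singleton (hvalid t ht)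
  · exact ⟨{s}, .refl, decNormal_iff.2 (by simpa using hdec), by simpa using h⟩
termination_by s.numConnectives

end NormalForms

theorem cpl0_valid_has_valid_normal_form_general
    (μ : Measure Cantor) [IsProbabilityMeasure μ]
    (Φ : Finset Sequent) (hΦ : ∀ s ∈ Φ, s.valid μ) :
    ∃ Ψ : Finset Sequent,
      Relation.ReflTransGen (Dec μ) Φ Ψ ∧
      DecNormal μ Ψ ∧ ∀ s ∈ Ψ, s.valid μ :=
  hasValidNormalForm_of_forall_singleton fun s hs => s.hasValidNormalForm_singleton (hΦ s hs)

/-- **Existential preservation of validity.** Every valid CPL₀ labelled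
sequent has a valid `⇝`-normal form: if `⊢ L` is valid then `{⊢ L}` reduces, by finitely
many `⇝`-steps, to a `⇝`-normal finite set of sequents all of which are valid. -/
theorem cpl0_valid_has_valid_normal_form
    (μ : Measure Cantor) (hμ : IsCantorMeasure μ)
    (L : LF) (hL : L.valid μ) :
    ∃ Ψ : Finset Sequent,
      Relation.ReflTransGen (Dec μ) {Sequent.lf L} Ψ ∧
      DecNormal μ Ψ ∧ ∀ s ∈ Ψ, s.valid μ := by
  have := hμ.1
  exact cpl0_valid_has_valid_normal_form_general μ {.lf L} (forall_valid_singleton.2 hL)
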